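/- Define s_n to be the coefficient of X^{n−1} in the polynomial ((1 + X + X^2)^n : ℤ[X]) for n ≥ 1 and s_0 = 0 (this is sequence A005717, the constant term of (X^{-1} + 1 + X)^n · X), so that 2s_n = T_{n+1} − T_n for all n. Let p > 2 be a prime such that p does not divide the central trinomial coefficient T_n for any n < p. Then the natural density of {n ∈ ℕ : p ∣ s_n} exists and equals ( |{m < p−1 : T_m ≡ T_{p−1}·T_{m+1} (mod p)}| + p·|{m < p−1 : T_m ≡ T_{m+1} (mod p)}| ) / ((p−1)(p+1)); moreover this density is at least 1/(p−1). -/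

import Mathlib

open Polynomial Filter

/-- The central trinomial coefficient `T_n`:
the coefficient of `X^n` in `(1 + X + X^2)^n`. -/
noncomputable def centralTrinomial (n : ℕ) : ℤ :=
  ((1 + X + X ^ 2 : Polynomial ℤ) ^ n).coeff n

/-- Sequence A005717: the coefficient of X^(n-1) in (1+X+X^2)^n for n ≥ 1, and 0 for n = 0
(the constant term of (X⁻¹+1+X)^n · X). -/
noncomputable def A005717 (n : ℕ) : ℤ :=
  if n = 0 then 0 else ((1 + X + X ^ 2 : Polynomial ℤ) ^ n).coeff (n - 1)


/-! Write `T` for the central trinomial coefficients and `s` for A005717. Since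
`T (n + 1) = T n + 2 * s n`, an odd prime `p` divides `s n` exactly when `T n ≡ T (n + 1)` modulo
`p`. By the Frobenius endomorphism, `T` modulo `p` is multiplicative over base-`p` digits. The
recurrence `(n + 2) * T (n + 2) = (2 * n + 3) * T (n + 1) + 3 * (n + 1) * T n` gives the
symmetry `(-3) ^ n * T (p - 1 - n) ≡ T (p - 1) * T n`, whence `T (p - 1) ^ 2 ≡ 1`.

When a nowhere vanishing digit-multiplicative sequence takes the value `1` at the last digit, its
set of coincidences `t n = t (n + 1)` is self-similar, so the error of counting this set against
its density is additive over digits and hence grows at most logarithmically. This applies to `T`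
modulo `p` in base `p ^ 2`, where the last digit `p ^ 2 - 1` has value `T (p - 1) ^ 2 ≡ 1`; counting
coincidences below `p ^ 2 - 1` by their base-`p` digits gives the formula. The lower bound comes
from `T 0 = T 1` and from a solution of `T m ≡ T (p - 1) * T (m + 1)` which the symmetry provides at
`m = 0` or `m = p - 3`. -/

section DigitAdditive

variable {E : Type*} [SeminormedAddGroup E] {b : ℕ} {f : ℕ → E}

theorem norm_le_log_mul_of_digit_additive (hb : 1 < b)
    (hf : ∀ k, ∀ r < b, f (b * k + r) = f k + f r) {K : ℝ} (hK : ∀ r < b, ‖f r‖ ≤ K) (N : ℕ) :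
    ‖f N‖ ≤ (Nat.log b N + 1) * K := by
  induction N using Nat.strong_induction_on with
  | _ N ih =>
    rcases lt_or_ge N b with hN | hN
    · simpa [Nat.log_of_lt hN] using hK N hN
    have hmod : N % b < b := Nat.mod_lt N (by lia)
    calc ‖f N‖ = ‖f (N / b) + f (N % b)‖ := by rw [← hf _ _ hmod, Nat.div_add_mod]
      _ ≤ (Nat.log b (N / b) + 1) * K + K :=
        norm_add_le_of_le (ih _ (Nat.div_lt_self (by lia) hb)) (hK _ hmod)
      _ = (Nat.log b N + 1) * K := by
        rw [Nat.log_of_one_lt_of_le hb hN]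
        push_cast
        ring

theorem isLittleO_natLog_natCast (b : ℕ) :
    (fun N : ℕ => (Nat.log b N : ℝ)) =o[atTop] fun N : ℕ => (N : ℝ) := by
  have hlog : (fun N : ℕ => (Nat.log b N : ℝ)) =O[atTop] fun N : ℕ => Real.log N := by
    refine Asymptotics.isBigO_of_le' (c := (Real.log b)⁻¹) atTop fun N => ?_
    have h := Real.natLog_le_logb N b
    rw [Real.logb, div_eq_inv_mul] at h
    rw [Real.norm_natCast, Real.norm_of_nonneg (Real.log_natCast_nonneg N)]
    exact h
  exact hlog.trans_isLittleO
    (Real.isLittleO_log_id_atTop.comp_tendsto tendsto_natCast_atTop_atTop)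

theorem isLittleO_natCast_of_digit_additive (hb : 1 < b)
    (hf : ∀ k, ∀ r < b, f (b * k + r) = f k + f r) :
    f =o[atTop] fun N : ℕ => (N : ℝ) := by
  set K : ℝ := ∑ r ∈ Finset.range b, ‖f r‖
  have hK : ∀ r < b, ‖f r‖ ≤ K := fun r hr =>
    Finset.single_le_sum (fun i _ => norm_nonneg (f i)) (Finset.mem_range.2 hr)
  have hbound : f =O[atTop] fun N => ((Nat.log b N : ℝ) + 1) * K :=
    .of_norm_le (norm_le_log_mul_of_digit_additive hb hf hK)
  have hone : (fun _ : ℕ => (1 : ℝ)) =o[atTop] fun N : ℕ => (N : ℝ) :=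
    (Asymptotics.isLittleO_const_id_atTop 1).comp_tendsto tendsto_natCast_atTop_atTop
  refine hbound.trans_isLittleO ?_
  simpa only [mul_comm _ K] using ((isLittleO_natLog_natCast b).add hone).const_mul_left K

end DigitAdditive

section SelfSimilar

variable {q : ℕ} {A B : ℕ → Prop} [DecidablePred A] [DecidablePred B]

theorem count_mul_add_of_digit_periodic (hA : ∀ k, ∀ m < q, A ((q + 1) * k + m) ↔ A m)
    (hB : ∀ k, A ((q + 1) * k + q) ↔ B k) (k : ℕ) {r : ℕ} (hr : r ≤ q) :
    Nat.count A ((q + 1) * k + r) = k * Nat.count A q + Nat.count B k + Nat.count A r := by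
  have hblock (k : ℕ) {r : ℕ} (hr : r ≤ q) :
      Nat.count (fun i => A ((q + 1) * k + i)) r = Nat.count A r := by
    simp only [Nat.count_eq_card_filter_range]
    refine congrArg _ (Finset.filter_congr fun m hm => hA k m ?_)
    exact (Finset.mem_range.1 hm).trans_le hr
  rw [Nat.count_add, hblock k hr]
  congr 1
  induction k with
  | zero => simp
  | succ k ih =>
    rw [mul_add_one, ← add_assoc, Nat.count_succ, Nat.count_add, ih, hblock k le_rfl,
      Nat.count_succ B]
    simp only [hB]
    ring

theorem tendsto_count_div_of_self_similar (hq : 0 < q)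
    (hA : ∀ k, ∀ m < q, A ((q + 1) * k + m) ↔ A m) (hlast : ∀ k, A ((q + 1) * k + q) ↔ A k) :
    Tendsto (fun N : ℕ => (Nat.count A N : ℝ) / N) atTop (nhds (Nat.count A q / q)) := by
  set d : ℝ := Nat.count A q / q
  have hadd : ∀ k, ∀ r < q + 1, (Nat.count A ((q + 1) * k + r) : ℝ) - d * ↑((q + 1) * k + r) =
      (Nat.count A k - d * k) + (Nat.count A r - d * r) := by
    intro k r hr
    have hd : d * q = Nat.count A q := div_mul_cancel₀ _ (by positivity)
    rw [count_mul_add_of_digit_periodic hA hlast k (Nat.lt_succ_iff.1 hr)]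
    push_cast
    linear_combination -(k : ℝ) * hd
  have hdiscrepancy : (fun N => Nat.count A N - d * N) =o[atTop] fun N : ℕ => (N : ℝ) :=
    isLittleO_natCast_of_digit_additive (by lia) hadd
  have hlim := hdiscrepancy.tendsto_div_nhds_zero.add_const d
  rw [zero_add] at hlim
  refine hlim.congr' ?_
  filter_upwards [eventually_gt_atTop 0] with N hN
  field_simp
  simp

end SelfSimilar

/-- A sequence `t` is strongly `b`-multiplicative if `t n` is the product of the values of `t` at
the base-`b` digits of `n`. This is encoded by splitting off the lowest digit. -/
def IsStronglyMultiplicative {M : Type*} [Mul M] (b : ℕ) (t : ℕ → M) : Prop :=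
  ∀ k, ∀ m < b, t (b * k + m) = t k * t m

namespace IsStronglyMultiplicative

theorem mul_base {M : Type*} [Semigroup M] {b c : ℕ} {t : ℕ → M}
    (hb : IsStronglyMultiplicative b t) (hc : IsStronglyMultiplicative c t) :
    IsStronglyMultiplicative (b * c) t := by
  intro k m hm
  have hb0 : 0 < b := Nat.pos_of_mul_pos_right (Nat.zero_lt_of_lt hm)
  have hmod : m % b < b := Nat.mod_lt m hb0
  have hdiv : m / b < c := Nat.div_lt_of_lt_mul hm
  calc t (b * c * k + m) = t (b * (c * k + m / b) + m % b) := by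
        rw [mul_add, ← mul_assoc, add_assoc, Nat.div_add_mod]
    _ = t k * (t (m / b) * t (m % b)) := by rw [hb _ _ hmod, hc _ _ hdiv, mul_assoc]
    _ = t k * t m := by rw [← hb _ _ hmod, Nat.div_add_mod]

theorem ne_zero {M : Type*} [MulZeroClass M] [NoZeroDivisors M] {b : ℕ} {t : ℕ → M}
    (ht : IsStronglyMultiplicative b t) (hb : 1 < b) (h : ∀ m < b, t m ≠ 0) (n : ℕ) :
    t n ≠ 0 := by
  induction n using Nat.strong_induction_on with
  | _ n ih =>
    rcases lt_or_ge n b with hn | hn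
    · exact h n hn
    have hmod : n % b < b := Nat.mod_lt n (by lia)
    rw [← Nat.div_add_mod n b, ht _ _ hmod]
    exact mul_ne_zero (ih _ (Nat.div_lt_self (by lia) hb)) (h _ hmod)

variable {M : Type*} [CommMonoidWithZero M] [IsCancelMulZero M] {q : ℕ} {t : ℕ → M}

theorem apply_zero (ht : IsStronglyMultiplicative (q + 1) t) (h0 : t 0 ≠ 0) : t 0 = 1 := by
  have h : t 0 = t 0 * t 0 := ht 0 0 q.succ_pos
  exact mul_left_cancel₀ h0 (by rw [← h, mul_one])

theorem eq_succ_iff_of_lt (ht : IsStronglyMultiplicative (q + 1) t) {k m : ℕ} (hk : t k ≠ 0)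
    (hm : m < q) :
    t ((q + 1) * k + m) = t ((q + 1) * k + m + 1) ↔ t m = t (m + 1) := by
  rw [add_assoc _ m, ht k m (by lia), ht k (m + 1) (by lia)]
  exact mul_right_inj' hk

theorem eq_succ_iff_last (ht : IsStronglyMultiplicative (q + 1) t) (h0 : t 0 ≠ 0)
    (hq : t q ^ 2 = 1) (k : ℕ) :
    t ((q + 1) * k + q) = t ((q + 1) * k + q + 1) ↔ t k = t q * t (k + 1) := by
  have hcarry : t ((q + 1) * k + q + 1) = t (k + 1) := by
    have h := ht (k + 1) 0 q.succ_pos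
    rwa [ht.apply_zero h0, mul_one] at h
  rw [hcarry, ht k q q.lt_succ_self]
  rw [sq] at hq
  constructor <;> intro h
  · rw [← h, mul_left_comm, hq, mul_one]
  · rw [h, mul_right_comm, hq, one_mul]

theorem tendsto_count_eq_succ_div [DecidableEq M] {b : ℕ} (ht : IsStronglyMultiplicative b t)
    (hb : 1 < b) (h0 : ∀ n, t n ≠ 0) (hlast : t (b - 1) ^ 2 = 1) :
    Tendsto (fun N : ℕ => (Nat.count (fun n => t n = t (n + 1)) N : ℝ) / N) atTop
      (nhds ((Nat.count (fun n => t n = t (b - 1) * t (n + 1)) (b - 1) +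
        b * Nat.count (fun n => t n = t (n + 1)) (b - 1)) / ((b - 1) * (b + 1)))) := by
  obtain ⟨q, rfl⟩ : ∃ q, b = q + 1 := ⟨b - 1, by lia⟩
  rw [Nat.add_sub_cancel] at hlast ⊢
  -- The square base makes the last value `t q ^ 2 = 1`, so the coincidence set is self-similar.
  have ht2 : IsStronglyMultiplicative (q * (q + 2) + 1) t := by
    rw [show q * (q + 2) + 1 = (q + 1) * (q + 1) by ring]
    exact ht.mul_base ht
  have hdigits : q * (q + 2) = (q + 1) * q + q := by ring
  have hlast2 : t (q * (q + 2)) = 1 := by rw [hdigits, ht q q q.lt_succ_self, ← sq, hlast]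
  have hlim := tendsto_count_div_of_self_similar (A := fun n => t n = t (n + 1))
    (q := q * (q + 2)) (Nat.mul_pos (by lia) (by lia))
    (fun k m hm => ht2.eq_succ_iff_of_lt (h0 k) hm)
    (fun k => by simpa [hlast2] using ht2.eq_succ_iff_last (h0 0) (by simp [hlast2]) k)
  have hcount := count_mul_add_of_digit_periodic (A := fun n => t n = t (n + 1))
    (fun k m hm => ht.eq_succ_iff_of_lt (h0 k) hm) (ht.eq_succ_iff_last (h0 0) hlast) q le_rfl
  rw [← hdigits] at hcount
  rw [hcount] at hlim
  convert hlim using 2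
  push_cast
  ring

end IsStronglyMultiplicative

theorem one_div_sub_one_le_of_one_le {b α β : ℕ} (hb : 1 < b) (hα : 1 ≤ α) (hβ : 1 ≤ β) :
    1 / ((b : ℝ) - 1) ≤ (β + b * α) / ((b - 1) * (b + 1)) := by
  have hb' : (0 : ℝ) < b - 1 := sub_pos.2 (mod_cast hb)
  have hα' : (1 : ℝ) ≤ α := mod_cast hα
  have hβ' : (1 : ℝ) ≤ β := mod_cast hβ
  calc 1 / ((b : ℝ) - 1) = (1 + b * 1) / ((b - 1) * (b + 1)) := by field_simp; ring
    _ ≤ (β + b * α) / ((b - 1) * (b + 1)) := by gcongr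

section TrinomialPowers

variable {R : Type*} [Semiring R]

theorem coeff_one_add_X_add_X_sq_mul (P : R[X]) (j : ℕ) :
    ((1 + X + X ^ 2) * P).coeff (j + 2) = P.coeff (j + 2) + P.coeff (j + 1) + P.coeff j := by
  rw [add_mul, add_mul, one_mul, coeff_add, coeff_add, coeff_X_mul (n := j + 1),
    coeff_X_pow_mul (d := j)]

theorem coeff_one_add_X_add_X_sq_pow_succ (n j : ℕ) :
    ((1 + X + X ^ 2 : R[X]) ^ (n + 1)).coeff (j + 2) =
      ((1 + X + X ^ 2 : R[X]) ^ n).coeff (j + 2) + ((1 + X + X ^ 2 : R[X]) ^ n).coeff (j + 1) +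
        ((1 + X + X ^ 2 : R[X]) ^ n).coeff j := by
  rw [pow_succ', coeff_one_add_X_add_X_sq_mul]

theorem coeff_X_mul_derivative (P : R[X]) (j : ℕ) :
    (X * derivative P).coeff j = j * P.coeff j := by
  cases j with
  | zero => simp
  | succ j => rw [coeff_X_mul, coeff_derivative, ← Nat.cast_succ, Nat.cast_comm]

theorem natDegree_one_add_X_add_X_sq_pow_le (n : ℕ) :
    ((1 + X + X ^ 2 : R[X]) ^ n).natDegree ≤ 2 * n := by
  rw [mul_comm]
  exact natDegree_pow_le_of_le n (by compute_degree)

end TrinomialPowers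

-- Compare coefficients in `Q * (X * P') = n * (X + 2 * X ^ 2) * P`, where `P = Q ^ n`.
theorem add_two_mul_coeff_one_add_X_add_X_sq_pow {R : Type*} [CommRing R] (n j : ℕ) :
    (j + 2) * ((1 + X + X ^ 2 : R[X]) ^ n).coeff (j + 2) =
      (n - j - 1) * ((1 + X + X ^ 2 : R[X]) ^ n).coeff (j + 1) +
        (2 * n - j) * ((1 + X + X ^ 2 : R[X]) ^ n).coeff j := by
  set P : R[X] := (1 + X + X ^ 2) ^ n with hP
  have hderiv : (1 + X + X ^ 2) * (X * derivative P) = C (n : R) * (X * P + 2 * (X ^ 2 * P)) := by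
    cases n with
    | zero => simp [hP]
    | succ n =>
      have hbase : derivative (1 + X + X ^ 2 : R[X]) = 1 + 2 * X := by
        rw [derivative_add, derivative_add, derivative_one, derivative_X, derivative_X_sq,
          map_ofNat, zero_add]
      rw [hP, derivative_pow_succ, hbase]
      push_cast
      ring
  have hcoeff := congrArg (coeff · (j + 2)) hderiv
  simp only [coeff_one_add_X_add_X_sq_mul, coeff_X_mul_derivative] at hcoeff
  simp only [coeff_C_mul, coeff_add, coeff_ofNat_mul, coeff_X_mul (n := j + 1),
    coeff_X_pow_mul (d := j)] at hcoeff
  push_cast at hcoeff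
  linear_combination hcoeff

theorem coeff_expand_mul_mul_add_of_natDegree_lt {R : Type*} [CommSemiring R] {p m : ℕ}
    (hm : m < p) (F : R[X]) {G : R[X]} (hG : G.natDegree < p + m) (k : ℕ) :
    (expand R p F * G).coeff (p * k + m) = F.coeff k * G.coeff m := by
  induction F using Polynomial.induction_on' with
  | add F₁ F₂ h₁ h₂ => rw [map_add, add_mul, coeff_add, coeff_add, h₁, h₂, add_mul]
  | monomial i a =>
    rw [expand_monomial, ← C_mul_X_pow_eq_monomial, mul_assoc, coeff_C_mul, coeff_X_pow_mul',
      coeff_monomial]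
    rcases lt_trichotomy i k with h | rfl | h
    · have hi : p * (i + 1) ≤ p * k := Nat.mul_le_mul_left p h
      rw [if_pos (by lia), if_neg h.ne, coeff_eq_zero_of_natDegree_lt (by lia), mul_zero, zero_mul]
    · rw [if_pos (by lia), if_pos rfl, mul_comm p, Nat.add_sub_cancel_left]
    · have hi : p * (k + 1) ≤ p * i := Nat.mul_le_mul_left p h
      rw [if_neg (by lia), if_neg h.ne', mul_zero, zero_mul]

theorem intCast_centralTrinomial {R : Type*} [Ring R] (n : ℕ) :
    (centralTrinomial n : R) = ((1 + X + X ^ 2 : R[X]) ^ n).coeff n := by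
  have h := coeff_map (p := (1 + X + X ^ 2 : ℤ[X]) ^ n) (Int.castRingHom R) n
  rw [Polynomial.map_pow] at h
  simpa [centralTrinomial] using h.symm

theorem A005717_succ (n : ℕ) :
    A005717 (n + 1) = ((1 + X + X ^ 2 : ℤ[X]) ^ (n + 1)).coeff n := by
  simp [A005717]

-- `1 + X + X ^ 2` is palindromic, so its powers are too; this form avoids truncated subtraction.
theorem A005717_eq_coeff_add_one (n : ℕ) :
    A005717 n = ((1 + X + X ^ 2 : ℤ[X]) ^ n).coeff (n + 1) := by
  cases n with
  | zero => simp [A005717, coeff_one]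
  | succ n =>
    rw [A005717_succ]
    have h := add_two_mul_coeff_one_add_X_add_X_sq_pow (R := ℤ) (n + 1) n
    have hn : (n + 2 : ℤ) ≠ 0 := by positivity
    apply mul_left_cancel₀ hn
    push_cast at h
    linear_combination -h

theorem centralTrinomial_zero : centralTrinomial 0 = 1 := by simp [centralTrinomial]

theorem centralTrinomial_one : centralTrinomial 1 = 1 := by
  simp [centralTrinomial, coeff_X, coeff_one]

theorem centralTrinomial_succ (n : ℕ) :
    centralTrinomial (n + 1) = centralTrinomial n + 2 * A005717 n := by
  cases n with
  | zero => simp [centralTrinomial_zero, centralTrinomial_one, A005717]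
  | succ n =>
    have h := coeff_one_add_X_add_X_sq_pow_succ (R := ℤ) (n + 1) n
    rw [← A005717_eq_coeff_add_one, ← A005717_succ] at h
    rw [centralTrinomial, centralTrinomial]
    linear_combination h

theorem add_two_mul_A005717_succ (n : ℕ) :
    (n + 2) * A005717 (n + 1) = (n + 1) * (A005717 n + 2 * centralTrinomial n) := by
  have hrec := add_two_mul_coeff_one_add_X_add_X_sq_pow (R := ℤ) n n
  rw [A005717_eq_coeff_add_one, A005717_eq_coeff_add_one, coeff_one_add_X_add_X_sq_pow_succ,
    centralTrinomial]
  linear_combination hrec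

theorem add_two_mul_centralTrinomial (n : ℕ) :
    (n + 2) * centralTrinomial (n + 2) =
      (2 * n + 3) * centralTrinomial (n + 1) + 3 * (n + 1) * centralTrinomial n := by
  linear_combination (n + 2 : ℤ) * centralTrinomial_succ (n + 1) +
    2 * add_two_mul_A005717_succ n - (n + 1 : ℤ) * centralTrinomial_succ n

theorem centralTrinomial_two : centralTrinomial 2 = 3 := by
  have h := add_two_mul_centralTrinomial 0
  rw [centralTrinomial_zero, centralTrinomial_one] at h
  lia

theorem dvd_A005717_iff {d : ℤ} (hd : Odd d) (n : ℕ) :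
    d ∣ A005717 n ↔ centralTrinomial n ≡ centralTrinomial (n + 1) [ZMOD d] := by
  have hcop : IsCoprime d 2 := Int.isCoprime_two_right.2 hd
  rw [Int.modEq_iff_dvd, centralTrinomial_succ, add_sub_cancel_left]
  exact ⟨fun h => h.mul_left 2, hcop.dvd_of_dvd_mul_left⟩

section Prime

variable {p : ℕ} [hp : Fact p.Prime]

theorem isStronglyMultiplicative_centralTrinomial :
    IsStronglyMultiplicative p fun n => (centralTrinomial n : ZMod p) := by
  intro k m hm
  have hfrob : (1 + X + X ^ 2 : (ZMod p)[X]) ^ (p * k + m) =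
      expand (ZMod p) p ((1 + X + X ^ 2) ^ k) * (1 + X + X ^ 2) ^ m := by
    rw [pow_add, mul_comm p, pow_mul, ZMod.expand_card]
  have hdeg : ((1 + X + X ^ 2 : (ZMod p)[X]) ^ m).natDegree < p + m :=
    (natDegree_one_add_X_add_X_sq_pow_le m).trans_lt (by lia)
  simp only [intCast_centralTrinomial]
  rw [hfrob, coeff_expand_mul_mul_add_of_natDegree_lt hm _ hdeg]

-- Modulo `p` the recurrence for `T` is invariant under `n ↦ p - 1 - n`, up to powers of `-3`.
theorem neg_three_pow_mul_centralTrinomial {n j : ℕ} (h : n + j + 1 = p) :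
    (-3 : ZMod p) ^ n * centralTrinomial j = centralTrinomial (p - 1) * centralTrinomial n := by
  have hrec (i : ℕ) : (i + 2) * (centralTrinomial (i + 2) : ZMod p) =
      (2 * i + 3) * centralTrinomial (i + 1) + 3 * (i + 1) * centralTrinomial i := by
    exact_mod_cast congrArg (Int.cast : ℤ → ZMod p) (add_two_mul_centralTrinomial i)
  have hj : (j : ZMod p) = -n - 1 := by
    have h0 : ((n + j + 1 : ℕ) : ZMod p) = 0 := (ZMod.natCast_eq_zero_iff _ _).2 h.symm.dvd
    push_cast at h0
    linear_combination h0
  induction n using Nat.twoStepInduction generalizing j with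
  | zero => simp [centralTrinomial_zero, show p - 1 = j by lia]
  | one =>
    have hrec_j := hrec j
    rw [hj] at hrec_j
    rw [show p - 1 = j + 1 by lia, centralTrinomial_one]
    push_cast at hrec_j ⊢
    linear_combination -hrec_j
  | more n ih₀ ih₁ =>
    have h₁ := ih₁ (j := j + 1) (by lia) (by push_cast at hj ⊢; linear_combination hj)
    have h₀ := ih₀ (j := j + 2) (by lia) (by push_cast at hj ⊢; linear_combination hj)
    have hn : ((n + 2 : ℕ) : ZMod p) ≠ 0 := by
      rw [Ne, ZMod.natCast_eq_zero_iff]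
      exact Nat.not_dvd_of_pos_of_lt (by lia) (by lia)
    have hrec_j := hrec j
    rw [hj] at hrec_j
    apply mul_left_cancel₀ hn
    push_cast at hrec_j ⊢
    linear_combination -(-3) ^ (n + 1) * hrec_j + (2 * n + 3 : ZMod p) * h₁ +
      3 * (n + 1 : ZMod p) * h₀ - (centralTrinomial (p - 1) : ZMod p) * hrec n

theorem centralTrinomial_sub_one_sq (hp3 : p ≠ 3) :
    (centralTrinomial (p - 1) : ZMod p) ^ 2 = 1 := by
  have h3 : (3 : ZMod p) ≠ 0 := mod_cast ZMod.prime_ne_zero p 3 hp3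
  have hsymm := neg_three_pow_mul_centralTrinomial (p := p) (n := p - 1) (j := 0)
    (Nat.sub_add_cancel hp.out.one_le)
  rw [ZMod.pow_card_sub_one_eq_one (neg_ne_zero.2 h3), centralTrinomial_zero] at hsymm
  simpa [sq] using hsymm.symm

theorem exists_centralTrinomial_eq_last_mul_succ (hp2 : 2 < p) (hp3 : p ≠ 3) :
    ∃ m < p - 1, (centralTrinomial m : ZMod p) =
      centralTrinomial (p - 1) * centralTrinomial (m + 1) := by
  rcases sq_eq_one_iff.1 (centralTrinomial_sub_one_sq hp3) with hlast | hlast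
  · exact ⟨0, by lia, by simp [hlast, centralTrinomial_zero, centralTrinomial_one]⟩
  · obtain ⟨j, hj⟩ : ∃ j, 2 + j + 1 = p := ⟨p - 3, by lia⟩
    have h3 : (3 : ZMod p) ≠ 0 := mod_cast ZMod.prime_ne_zero p 3 hp3
    refine ⟨j, by lia, ?_⟩
    have h₁ := neg_three_pow_mul_centralTrinomial (p := p) (n := 1) (j := j + 1) (by lia)
    have h₂ := neg_three_pow_mul_centralTrinomial hj
    rw [hlast, centralTrinomial_one] at h₁
    rw [hlast, centralTrinomial_two] at h₂
    rw [hlast]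
    push_cast at h₁ h₂
    apply mul_left_cancel₀ (pow_ne_zero 2 h3)
    linear_combination h₂ - 3 * h₁

end Prime

open scoped Classical in
theorem stmt16 (p : ℕ) (hp : p.Prime) (hp2 : 2 < p)
    (hT : ∀ n < p, ¬ (p : ℤ) ∣ centralTrinomial n) :
    Tendsto
      (fun N : ℕ =>
        (((Finset.range N).filter (fun n => (p : ℤ) ∣ A005717 n)).card : ℝ) / N)
      atTop
      (nhds
        (((((Finset.range (p - 1)).filter
            (fun m => centralTrinomial m ≡
              centralTrinomial (p - 1) * centralTrinomial (m + 1) [ZMOD (p : ℤ)])).card : ℝ) +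
          (p : ℝ) * (((Finset.range (p - 1)).filter
            (fun m => centralTrinomial m ≡ centralTrinomial (m + 1) [ZMOD (p : ℤ)])).card : ℝ)) /
          (((p : ℝ) - 1) * ((p : ℝ) + 1)))) ∧
    1 / ((p : ℝ) - 1) ≤
      ((((Finset.range (p - 1)).filter
          (fun m => centralTrinomial m ≡
            centralTrinomial (p - 1) * centralTrinomial (m + 1) [ZMOD (p : ℤ)])).card : ℝ) +
        (p : ℝ) * (((Finset.range (p - 1)).filter
          (fun m => centralTrinomial m ≡ centralTrinomial (m + 1) [ZMOD (p : ℤ)])).card : ℝ)) /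
        (((p : ℝ) - 1) * ((p : ℝ) + 1)) := by
  have : Fact p.Prime := ⟨hp⟩
  have hp3 : p ≠ 3 := by
    rintro rfl
    exact hT 2 (by norm_num) (by norm_num [centralTrinomial_two])
  have hodd : Odd (p : ℤ) := mod_cast hp.odd_of_ne_two hp2.ne'
  have hlucas := isStronglyMultiplicative_centralTrinomial (p := p)
  have hne := hlucas.ne_zero hp.one_lt fun m hm =>
    (ZMod.intCast_zmod_eq_zero_iff_dvd _ p).not.2 (hT m hm)
  have hdensity :=
    hlucas.tendsto_count_eq_succ_div hp.one_lt hne (centralTrinomial_sub_one_sq hp3)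
  simp only [dvd_A005717_iff hodd, ← ZMod.intCast_eq_intCast_iff, Int.cast_mul,
    ← Nat.count_eq_card_filter_range]
  refine ⟨hdensity, one_div_sub_one_le_of_one_le hp.one_lt ?_ ?_⟩
  all_goals rw [Nat.one_le_iff_ne_zero, Nat.count_ne_iff_exists]
  · exact ⟨0, by lia, by simp [centralTrinomial_zero, centralTrinomial_one]⟩
  · exact exists_centralTrinomial_eq_last_mul_succ hp2 hp3
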